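/- There exist absolute constants c₀ > 0 and C > 0 such that the following holds. Let ε > 0 and 0 < θ ≤ c₀·ε, let p be a polynomial of degree at most d on ℝ^n, and let X and Y be independent standard n-dimensional Gaussian vectors. Then Pr_{X,Y}( |p(X)| < (ε/θ) · |p(X) − p(N_Y^θ(X))| ) ≤ C · d² · ε. -/

import Mathlib

open MeasureTheory ProbabilityTheory

/-- The standard Gaussian measure on `ℝ^n`. -/
noncomputable def stdGaussian (n : ℕ) : Measure (Fin n → ℝ) :=
  Measure.pi fun _ => gaussianReal 0 1

/-- `N_Y^θ(X) = cos θ · X + sin θ · Y`. -/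
noncomputable def noisy {n : ℕ} (θ : ℝ) (Y X : Fin n → ℝ) : Fin n → ℝ :=
  Real.cos θ • X + Real.sin θ • Y

/-- The noisy derivative `D_{Y,Z}^θ f (X)`. -/
noncomputable def noisyDeriv {n : ℕ} (θ : ℝ) (Y Z : Fin n → ℝ)
    (f : (Fin n → ℝ) → ℝ) (X : Fin n → ℝ) : ℝ :=
  (f (noisy θ Y X) - f (noisy θ Z X)) / θ

/-- `|f_θ^{(ℓ)}(X)|₂²`, the mean square of the `ℓ`-fold noisy derivative over
independent standard Gaussian directions. -/
noncomputable def derivNormSq (n : ℕ) (θ : ℝ) : ℕ → ((Fin n → ℝ) → ℝ) → (Fin n → ℝ) → ℝ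
  | 0, f, X => (f X) ^ 2
  | (ℓ+1), f, X =>
      ∫ YZ : (Fin n → ℝ) × (Fin n → ℝ),
        derivNormSq n θ ℓ (noisyDeriv θ YZ.1 YZ.2 f) X
        ∂((stdGaussian n).prod (stdGaussian n))

/-- The averaging operator `A^θ f (X) = E_Y[f(N_Y^θ(X))]`. -/
noncomputable def avgOp (n : ℕ) (θ : ℝ) (f : (Fin n → ℝ) → ℝ) (X : Fin n → ℝ) : ℝ :=
  ∫ Y, f (noisy θ Y X) ∂(stdGaussian n)

/-- `q_{ℓ,m}(X) = |p_θ^{(ℓ),m}(X)|₂² = (A^θ)^m |p_θ^{(ℓ)}(X)|₂²`. -/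
noncomputable def qlm (n : ℕ) (θ : ℝ) (p : MvPolynomial (Fin n) ℝ) (ℓ m : ℕ)
    (X : Fin n → ℝ) : ℝ :=
  (avgOp n θ)^[m] (derivNormSq n θ ℓ (fun W => MvPolynomial.eval W p)) X

/-- The Gaussian `L^k` norm of a function on `ℝ^n`. -/
noncomputable def gaussNorm (n : ℕ) (k : ℝ) (p : (Fin n → ℝ) → ℝ) : ℝ :=
  (∫ X, |p X| ^ k ∂(stdGaussian n)) ^ (1 / k)

/-- `f` is a degree-`d` polynomial threshold function on `ℝ^n`. -/
def isPTF (n d : ℕ) (f : (Fin n → ℝ) → ℝ) : Prop :=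
  ∃ p : MvPolynomial (Fin n) ℝ, p.totalDegree ≤ d ∧
    ∀ x, f x = Real.sign (MvPolynomial.eval x p)

/-- `X` is a `k`-independent family of standard Gaussians: any `m ≤ k` distinct
coordinates are jointly distributed as `m` independent standard Gaussians. -/
def kIndepGaussian {Ω : Type} [MeasurableSpace Ω] (n k : ℕ) (P : Measure Ω)
    (X : Ω → (Fin n → ℝ)) : Prop :=
  ∀ m : ℕ, m ≤ k → ∀ ι : Fin m → Fin n, Function.Injective ι →
    Measure.map (fun ω i => X ω (ι i)) P = Measure.pi fun _ : Fin m => gaussianReal 0 1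

lemma aux_prod (s : Multiset ℂ) :
    ‖(s.map (fun x => 1 + x)).prod - 1‖ ≤ Real.exp ((s.map (fun x => ‖x‖)).sum) - 1 := by
  induction s using Multiset.induction with
  | empty => simp
  | cons x s ih =>
    simp only [Multiset.map_cons, Multiset.prod_cons, Multiset.sum_cons]
    set P := (s.map (fun x => 1 + x)).prod
    set S := (s.map (fun x => ‖x‖)).sum
    have h1 : (1 + x) * P - 1 = (1 + x) * (P - 1) + x := by ring
    have h2 : ‖(1 + x) * P - 1‖ ≤ (1 + ‖x‖) * (Real.exp S - 1) + ‖x‖ := by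
      rw [h1]
      refine (norm_add_le _ _).trans ?_
      rw [norm_mul]
      have h3 : ‖1 + x‖ ≤ 1 + ‖x‖ := (norm_add_le _ _).trans (by simp)
      gcongr
    rw [Real.exp_add]
    have h4 := Real.add_one_le_exp ‖x‖
    have h5 := Real.exp_pos S
    nlinarith

/-- The perturbation estimate on the unit circle. -/
lemma aux_perturb (Q : Polynomial ℂ) (hQ : Q ≠ 0) (d : ℕ) (hd : Q.natDegree ≤ 2 * d)
    (z w v : ℂ) (hz : ‖z‖ = 1) (θ δ : ℝ) (hw : ‖w - 1‖ ≤ θ) (hv : ‖v - 1‖ ≤ θ)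
    (hδ : 0 < δ) (hroots : ∀ a ∈ Q.roots, δ ≤ ‖z - a‖) :
    ‖v ^ d * Q.eval (z * w) - Q.eval z‖ ≤
      ‖Q.eval z‖ * (Real.exp (2 * d * (θ / δ) + d * θ) - 1) := by
  have hθ : 0 ≤ θ := (norm_nonneg _).trans hw
  have hs := IsAlgClosed.splits Q
  set s : Multiset ℂ := Q.roots.map (fun a => z * (w - 1) / (z - a)) +
    Multiset.replicate d (v - 1) with hsdef
  have key : v ^ d * Q.eval (z * w) = Q.eval z * (s.map (fun x => 1 + x)).prod := by
    rw [hs.eval_eq_prod_roots, hs.eval_eq_prod_roots, hsdef]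
    simp only [Multiset.map_add, Multiset.prod_add, Multiset.map_map, Multiset.map_replicate,
      Multiset.prod_replicate, add_sub_cancel]
    have : (Q.roots.map (fun a => z * w - a)).prod = (Q.roots.map (fun a => z - a)).prod *
        (Q.roots.map ((fun x => 1 + x) ∘ fun a => z * (w - 1) / (z - a))).prod := by
      rw [← Multiset.prod_map_mul]
      congr 1
      apply Multiset.map_congr rfl
      intro a ha
      have hne : z - a ≠ 0 := by
        intro h
        have := hroots a ha
        rw [h, norm_zero] at this
        linarith
      simp only [Function.comp]
      field_simp
      ring
    rw [this]
    ring
  rw [key]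
  have h1 : Q.eval z * (s.map (fun x => 1 + x)).prod - Q.eval z =
      Q.eval z * ((s.map (fun x => 1 + x)).prod - 1) := by ring
  rw [h1, norm_mul]
  gcongr
  refine (aux_prod s).trans ?_
  gcongr
  rw [hsdef]
  simp only [Multiset.map_add, Multiset.sum_add, Multiset.map_map, Multiset.map_replicate,
    Multiset.sum_replicate, nsmul_eq_mul]
  have hcard : (Multiset.card Q.roots : ℝ) ≤ 2 * d := by
    have := (Polynomial.card_roots' Q).trans hd
    exact_mod_cast this
  have h2 : (Q.roots.map ((fun x => ‖x‖) ∘ fun a => z * (w - 1) / (z - a))).sum ≤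
      Multiset.card Q.roots * (θ / δ) := by
    have := Multiset.sum_le_card_nsmul
      (Q.roots.map ((fun x => ‖x‖) ∘ fun a => z * (w - 1) / (z - a))) (θ / δ) (by
        intro x hx
        rw [Multiset.mem_map] at hx
        obtain ⟨a, ha, rfl⟩ := hx
        simp only [Function.comp, norm_div, norm_mul, hz, one_mul]
        have := hroots a ha
        gcongr)
    simpa using this
  have h3 : (Multiset.card Q.roots : ℝ) * (θ / δ) ≤ 2 * d * (θ / δ) := by
    gcongr
  have h4 : (d : ℝ) * ‖v - 1‖ ≤ d * θ := by gcongr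
  linarith

lemma aux_chord (x y : ℝ) (hx : x ∈ Set.Icc (0:ℝ) 1) (hy : y ∈ Set.Icc (0:ℝ) 1) (hxy : y ≤ x) :
    x - y ≤ 2 * ‖Complex.exp (Complex.I * x) - Complex.exp (Complex.I * y)‖ := by
  have h1 : Complex.exp (Complex.I * x) - Complex.exp (Complex.I * y) =
      Complex.exp (Complex.I * y) * (Complex.exp (Complex.I * ((x - y : ℝ) : ℂ)) - 1) := by
    rw [mul_sub, ← Complex.exp_add]
    push_cast
    ring_nf
  rw [h1, norm_mul, Complex.norm_exp_I_mul_ofReal_sub_one, mul_comm Complex.I,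
    Complex.norm_exp_ofReal_mul_I, one_mul, Real.norm_eq_abs]
  obtain ⟨hx0, hx1⟩ := hx
  obtain ⟨hy0, hy1⟩ := hy
  have hpi := Real.pi_gt_three
  have hpi4 := Real.pi_le_four
  have h2 := Real.mul_le_sin (x := (x - y) / 2) (by linarith) (by linarith)
  have h3 : (x - y) / 4 ≤ 2 / Real.pi * ((x - y) / 2) := by
    rw [div_mul_div_comm, div_le_div_iff₀ (by norm_num) (by positivity)]
    nlinarith
  have h4 := le_abs_self (2 * Real.sin ((x - y) / 2))
  linarith

lemma aux_arc (a : ℂ) (δ : ℝ) :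
    volume {φ : ℝ | φ ∈ Set.Icc (0:ℝ) 1 ∧ ‖Complex.exp (Complex.I * φ) - a‖ < δ} ≤
      ENNReal.ofReal (4 * δ) := by
  refine (Real.volume_le_diam _).trans ?_
  rw [Metric.ediam_le_iff]
  rintro x ⟨hx, hxa⟩ y ⟨hy, hya⟩
  rw [edist_dist]
  apply ENNReal.ofReal_le_ofReal
  rw [Real.dist_eq]
  have h (x y : ℝ) : ‖Complex.exp (Complex.I * x) - Complex.exp (Complex.I * y)‖ ≤
    ‖Complex.exp (Complex.I * x) - a‖ + ‖Complex.exp (Complex.I * y) - a‖ := by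
    have := norm_sub_le (Complex.exp (Complex.I * x) - a) (Complex.exp (Complex.I * y) - a)
    simpa using this
  rcases le_total y x with hxy | hxy
  · rw [abs_of_nonneg (by linarith)]
    linarith [aux_chord x y hx hy hxy, h x y]
  · rw [abs_of_nonpos (by linarith)]
    linarith [aux_chord y x hy hx hxy, h y x]

/-- Restriction of a polynomial to a circle as a complex polynomial. -/
lemma aux_circle {n : ℕ} (d : ℕ) (p : MvPolynomial (Fin n) ℝ) (hp : p.totalDegree ≤ d)
    (X Y : Fin n → ℝ) :
    ∃ Q : Polynomial ℂ, Q.natDegree ≤ 2 * d ∧ ∀ φ : ℝ,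
      Q.eval (Complex.exp (Complex.I * φ)) = Complex.exp (Complex.I * φ) ^ d *
        ((MvPolynomial.eval (noisy φ Y X) p : ℝ) : ℂ) := by
  let L : Fin n → Polynomial ℂ := fun i =>
    Polynomial.C (((X i : ℂ) - Complex.I * Y i) / 2) * Polynomial.X ^ 2 +
      Polynomial.C (((X i : ℂ) + Complex.I * Y i) / 2)
  have hLdeg : ∀ i, (L i).natDegree ≤ 2 := by
    intro i
    simp only [L]
    compute_degree
  have hL : ∀ i (φ : ℝ), (L i).eval (Complex.exp (Complex.I * φ)) =
      Complex.exp (Complex.I * φ) * ((noisy φ Y X i : ℝ) : ℂ) := by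
    intro i φ
    have he : Complex.exp (Complex.I * φ) = Complex.cos φ + Complex.sin φ * Complex.I := by
      rw [mul_comm, Complex.exp_mul_I]
    have hI := Complex.I_sq
    have hcs := Complex.sin_sq_add_cos_sq (φ : ℂ)
    simp only [L, noisy, he]
    simp only [Polynomial.eval_add, Polynomial.eval_mul, Polynomial.eval_C, Polynomial.eval_pow,
      Polynomial.eval_X, Pi.add_apply, Pi.smul_apply, smul_eq_mul]
    push_cast
    generalize Complex.cos φ = c at *
    generalize Complex.sin φ = s at *
    generalize (X i : ℂ) = x at *
    generalize (Y i : ℂ) = y at *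
    generalize Complex.I = I at *
    grind
  refine ⟨∑ m ∈ p.support, Polynomial.C ((p.coeff m : ℝ) : ℂ) *
    (Polynomial.X ^ (d - m.sum fun _ e => e) * ∏ i, L i ^ m i), ?_, ?_⟩
  · apply Polynomial.natDegree_sum_le_of_forall_le
    intro m hm
    refine (Polynomial.natDegree_C_mul_le _ _).trans ?_
    refine Polynomial.natDegree_mul_le.trans ?_
    have h1 : (m.sum fun _ e => e) ≤ d := (MvPolynomial.le_totalDegree hm).trans hp
    have h2 : (∏ i, L i ^ m i).natDegree ≤ 2 * (m.sum fun _ e => e) := by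
      refine (Polynomial.natDegree_prod_le _ _).trans ?_
      rw [Finsupp.sum_fintype _ _ (fun _ => rfl), Finset.mul_sum]
      apply Finset.sum_le_sum
      intro i _
      refine Polynomial.natDegree_pow_le.trans ?_
      rw [mul_comm]
      exact Nat.mul_le_mul_right _ (hLdeg i)
    rw [Polynomial.natDegree_X_pow]
    omega
  · intro φ
    rw [Polynomial.eval_finsetSum, MvPolynomial.eval_eq', Complex.ofReal_sum, Finset.mul_sum]
    apply Finset.sum_congr rfl
    intro m hm
    have h1 : (m.sum fun _ e => e) ≤ d := (MvPolynomial.le_totalDegree hm).trans hp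
    simp only [Polynomial.eval_mul, Polynomial.eval_C, Polynomial.eval_pow, Polynomial.eval_X,
      Polynomial.eval_prod, hL, mul_pow, Finset.prod_mul_distrib, Finset.prod_pow_eq_pow_sum]
    rw [Finsupp.sum_fintype _ _ (fun _ => rfl)] at h1 ⊢
    push_cast
    rw [← Nat.sub_add_cancel h1, pow_add]
    simp only [Nat.add_sub_cancel]
    ring

lemma aux_angle {n : ℕ} (d : ℕ) (hd : 1 ≤ d) (p : MvPolynomial (Fin n) ℝ) (hp : p.totalDegree ≤ d)
    (X Y : Fin n → ℝ) (ε θ : ℝ) (hε : 0 < ε) (hθ : 0 < θ) (hθε : θ ≤ ε)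
    (hsmall : 64 * (d : ℝ) ^ 2 * ε ≤ 1) :
    volume {φ : ℝ | φ ∈ Set.Icc (0:ℝ) 1 ∧ |MvPolynomial.eval (noisy φ Y X) p| <
      (ε / θ) * |MvPolynomial.eval (noisy φ Y X) p -
        MvPolynomial.eval (noisy (φ + θ) Y X) p|} ≤ ENNReal.ofReal (64 * (d : ℝ) ^ 2 * ε) := by
  obtain ⟨Q, hQd, hQ⟩ := aux_circle d p hp X Y
  have hnorm : ∀ φ : ℝ, ‖Complex.exp (Complex.I * φ)‖ = 1 := by
    intro φ
    rw [mul_comm, Complex.norm_exp_ofReal_mul_I]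
  have hd1 : (1:ℝ) ≤ d := by exact_mod_cast hd
  by_cases hQ0 : Q = 0
  · have hz : ∀ φ : ℝ, MvPolynomial.eval (noisy φ Y X) p = 0 := by
      intro φ
      have h := hQ φ
      rw [hQ0, Polynomial.eval_zero] at h
      have h2 : Complex.exp (Complex.I * φ) ^ d ≠ 0 := pow_ne_zero _ (Complex.exp_ne_zero _)
      have h3 := (mul_eq_zero.mp h.symm).resolve_left h2
      exact_mod_cast h3
    simp [hz]
  set δ : ℝ := 8 * d * ε with hδdef
  have hδ : 0 < δ := by positivity
  have hsub : {φ : ℝ | φ ∈ Set.Icc (0:ℝ) 1 ∧ |MvPolynomial.eval (noisy φ Y X) p| <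
      (ε / θ) * |MvPolynomial.eval (noisy φ Y X) p -
        MvPolynomial.eval (noisy (φ + θ) Y X) p|} ⊆
      ⋃ a ∈ Q.roots.toFinset,
        {φ : ℝ | φ ∈ Set.Icc (0:ℝ) 1 ∧ ‖Complex.exp (Complex.I * φ) - a‖ < δ} := by
    rintro φ ⟨hφ, hbad⟩
    by_contra hcon
    simp only [Set.mem_iUnion, Set.mem_setOf_eq, not_exists, not_and, not_lt,
      Multiset.mem_toFinset] at hcon
    have hroots : ∀ a ∈ Q.roots, δ ≤ ‖Complex.exp (Complex.I * φ) - a‖ :=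
      fun a ha => hcon a ha hφ
    have hw : ‖Complex.exp (Complex.I * θ) - 1‖ ≤ θ := by
      have := Real.norm_exp_I_mul_ofReal_sub_one_le (x := θ)
      rwa [Real.norm_of_nonneg hθ.le] at this
    have hv : ‖Complex.exp (Complex.I * ((-θ : ℝ) : ℂ)) - 1‖ ≤ θ := by
      have := Real.norm_exp_I_mul_ofReal_sub_one_le (x := -θ)
      rwa [norm_neg, Real.norm_of_nonneg hθ.le] at this
    have hmain := aux_perturb Q hQ0 d hQd _ _ _ (hnorm φ) θ δ hw hv hδ hroots
    have hzw : Complex.exp (Complex.I * φ) * Complex.exp (Complex.I * θ) =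
        Complex.exp (Complex.I * ((φ + θ : ℝ) : ℂ)) := by
      rw [← Complex.exp_add]; push_cast; ring_nf
    have hvw : Complex.exp (Complex.I * ((-θ : ℝ) : ℂ)) * Complex.exp (Complex.I * ((φ + θ : ℝ) : ℂ))
        = Complex.exp (Complex.I * φ) := by
      rw [← Complex.exp_add]; push_cast; ring_nf
    rw [hzw, hQ, hQ, ← mul_assoc, ← mul_pow, hvw, ← mul_sub, norm_mul, norm_mul, norm_pow, hnorm,
      one_pow, one_mul, one_mul, ← Complex.ofReal_sub, Complex.norm_real, Complex.norm_real,
      Real.norm_eq_abs, Real.norm_eq_abs, abs_sub_comm] at hmain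
    set S : ℝ := 2 * d * (θ / δ) + d * θ with hS
    have hr : θ / ε ≤ 1 := by rw [div_le_one hε]; exact hθε
    have hr0 : 0 < θ / ε := by positivity
    have hS1 : S ≤ (θ / ε) / 2 := by
      have e1 : 2 * d * (θ / δ) = (θ / ε) / 4 := by
        rw [hδdef]; field_simp; norm_num
      have e2 : d * θ = (θ / ε) * (d * ε) := by field_simp
      have e3 : d * ε ≤ 1 / 64 := by nlinarith
      rw [hS, e1, e2]
      nlinarith
    have hS0 : 0 ≤ S := by positivity
    have hexp : Real.exp S - 1 ≤ θ / ε := by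
      have h := Real.abs_exp_sub_one_le (x := S) (by rw [abs_of_nonneg hS0]; linarith)
      rw [abs_of_nonneg hS0] at h
      linarith [le_abs_self (Real.exp S - 1)]
    have hfin : |MvPolynomial.eval (noisy φ Y X) p - MvPolynomial.eval (noisy (φ + θ) Y X) p| ≤
        |MvPolynomial.eval (noisy φ Y X) p| * (θ / ε) :=
      hmain.trans (mul_le_mul_of_nonneg_left hexp (abs_nonneg _))
    have : (ε / θ) * |MvPolynomial.eval (noisy φ Y X) p -
        MvPolynomial.eval (noisy (φ + θ) Y X) p| ≤ |MvPolynomial.eval (noisy φ Y X) p| := by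
      calc _ ≤ (ε / θ) * (|MvPolynomial.eval (noisy φ Y X) p| * (θ / ε)) := by gcongr
        _ = _ := by field_simp
    linarith
  refine (measure_mono hsub).trans ((measure_biUnion_finset_le _ _).trans ?_)
  refine (Finset.sum_le_card_nsmul _ _ _ (fun a _ => aux_arc a δ)).trans ?_
  have hcard : (Q.roots.toFinset.card : ℝ) ≤ 2 * d := by
    have := ((Multiset.toFinset_card_le Q.roots).trans (Polynomial.card_roots' Q)).trans hQd
    exact_mod_cast this
  rw [nsmul_eq_mul, ← ENNReal.ofReal_natCast, ← ENNReal.ofReal_mul (by positivity)]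
  apply ENNReal.ofReal_le_ofReal
  calc (Q.roots.toFinset.card : ℝ) * (4 * δ) ≤ 2 * d * (4 * δ) := by gcongr
    _ = _ := by rw [hδdef]; ring

instance aux_prob (n : ℕ) : IsProbabilityMeasure (_root_.stdGaussian n) := by
  unfold _root_.stdGaussian; infer_instance

lemma aux_gauss (n : ℕ) : IsGaussian (_root_.stdGaussian n) := by
  have h1 : iIndepFun (fun (i : Fin n) (ω : Fin n → ℝ) => id (ω i)) (_root_.stdGaussian n) :=
    iIndepFun_pi (X := fun _ => id) (fun _ => aemeasurable_id)
  have h2 : ∀ i : Fin n, HasGaussianLaw (fun ω : Fin n → ℝ => id (ω i)) (_root_.stdGaussian n) := by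
    intro i
    refine ⟨?_⟩
    have : (_root_.stdGaussian n).map (fun ω : Fin n → ℝ => id (ω i)) = gaussianReal 0 1 :=
      (measurePreserving_eval (fun _ : Fin n => gaussianReal 0 1) i).map_eq
    rw [this]; infer_instance
  have h3 := (h1.hasGaussianLaw h2).isGaussian_map
  have h4 : (fun (ω : Fin n → ℝ) => (fun i => id (ω i))) = id := rfl
  rw [h4, Measure.map_id] at h3
  exact h3

lemma aux_mean (n : ℕ) : (_root_.stdGaussian n)[id] = 0 := by
  have := aux_gauss n
  have hint : Integrable (fun x : Fin n → ℝ => x) (_root_.stdGaussian n) := IsGaussian.integrable_id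
  ext i
  have h := eval_integral (μ := _root_.stdGaussian n) (f := fun x : Fin n → ℝ => x)
    (fun j => hint.eval j) i
  simp only [id]
  rw [h]
  have hm := measurePreserving_eval (fun _ : Fin n => gaussianReal 0 1) i
  have h5 : ∫ x, x ∂((_root_.stdGaussian n).map (Function.eval i)) = ∫ x : Fin n → ℝ, x i ∂(_root_.stdGaussian n) :=
    integral_map (measurable_pi_apply i).aemeasurable aestronglyMeasurable_id
  rw [← h5]
  unfold _root_.stdGaussian
  rw [hm.map_eq]
  simp

lemma aux_rot (n : ℕ) (φ : ℝ) :
    MeasurePreserving (ContinuousLinearMap.rotation φ : (Fin n → ℝ) × (Fin n → ℝ) →L[ℝ] _)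
      ((_root_.stdGaussian n).prod (_root_.stdGaussian n))
      ((_root_.stdGaussian n).prod (_root_.stdGaussian n)) := by
  have := aux_gauss n
  exact ⟨(ContinuousLinearMap.continuous _).measurable,
    IsGaussian.map_rotation_eq_self (aux_mean n) φ⟩

lemma aux_noisy {n : ℕ} (φ θ : ℝ) (XY : (Fin n → ℝ) × (Fin n → ℝ)) :
    noisy θ (ContinuousLinearMap.rotation φ XY).2 (ContinuousLinearMap.rotation φ XY).1 =
      noisy (φ + θ) XY.2 XY.1 := by
  ext i
  simp only [noisy, ContinuousLinearMap.rotation_apply, Pi.add_apply, Pi.smul_apply, smul_eq_mul,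
    Real.cos_add, Real.sin_add]
  ring

lemma aux_main {n : ℕ} (d : ℕ) (hd : 1 ≤ d) (p : MvPolynomial (Fin n) ℝ) (hp : p.totalDegree ≤ d)
    (ε θ : ℝ) (hε : 0 < ε) (hθ : 0 < θ) (hθε : θ ≤ ε) (hsmall : 64 * (d : ℝ) ^ 2 * ε ≤ 1) :
    ((_root_.stdGaussian n).prod (_root_.stdGaussian n))
            {XY | |MvPolynomial.eval XY.1 p| <
                  (ε / θ) * |MvPolynomial.eval XY.1 p -
                              MvPolynomial.eval (noisy θ XY.2 XY.1) p|} ≤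
      ENNReal.ofReal (64 * (d : ℝ) ^ 2 * ε) := by
  set μ := (_root_.stdGaussian n).prod (_root_.stdGaussian n) with hμ
  set B : Set ((Fin n → ℝ) × (Fin n → ℝ)) := {XY | |MvPolynomial.eval XY.1 p| <
                  (ε / θ) * |MvPolynomial.eval XY.1 p -
                              MvPolynomial.eval (noisy θ XY.2 XY.1) p|} with hB
  have hpc : Continuous fun x : Fin n → ℝ => MvPolynomial.eval x p := MvPolynomial.continuous_eval p
  have hBm : MeasurableSet B := by
    apply IsOpen.measurableSet
    apply isOpen_lt
    · exact (hpc.comp continuous_fst).abs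
    · refine continuous_const.mul (Continuous.abs (Continuous.sub (hpc.comp continuous_fst)
        (hpc.comp ?_)))
      unfold noisy
      fun_prop
  let S : Set (ℝ × ((Fin n → ℝ) × (Fin n → ℝ))) :=
    {q | |MvPolynomial.eval (noisy q.1 q.2.2 q.2.1) p| < (ε / θ) *
      |MvPolynomial.eval (noisy q.1 q.2.2 q.2.1) p -
        MvPolynomial.eval (noisy (q.1 + θ) q.2.2 q.2.1) p|}
  have hSm : MeasurableSet S := by
    apply IsOpen.measurableSet
    have c1 : Continuous fun q : ℝ × ((Fin n → ℝ) × (Fin n → ℝ)) => noisy q.1 q.2.2 q.2.1 := by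
      unfold noisy; fun_prop
    have c2 : Continuous fun q : ℝ × ((Fin n → ℝ) × (Fin n → ℝ)) =>
        noisy (q.1 + θ) q.2.2 q.2.1 := by
      unfold noisy; fun_prop
    apply isOpen_lt
    · exact (hpc.comp c1).abs
    · exact continuous_const.mul (Continuous.abs (Continuous.sub (hpc.comp c1) (hpc.comp c2)))
  have hslice : ∀ φ : ℝ, μ (Prod.mk φ ⁻¹' S) = μ B := by
    intro φ
    rw [← (aux_rot n φ).measure_preimage hBm.nullMeasurableSet]
    congr 1
    ext XY
    have h := aux_noisy φ θ XY
    simp only [S, hB, Set.mem_preimage, Set.mem_setOf_eq]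
    rw [h]
    rfl
  have h1 : ((volume.restrict (Set.Icc (0:ℝ) 1)).prod μ) S = μ B := by
    rw [Measure.prod_apply hSm]
    simp [hslice]
  have h2 : ((volume.restrict (Set.Icc (0:ℝ) 1)).prod μ) S ≤
      ENNReal.ofReal (64 * (d : ℝ) ^ 2 * ε) := by
    rw [Measure.prod_apply_symm hSm]
    calc _ ≤ ∫⁻ _, ENNReal.ofReal (64 * (d : ℝ) ^ 2 * ε) ∂μ := by
          apply lintegral_mono
          intro XY
          simp only
          rw [Measure.restrict_apply (measurable_prodMk_right hSm)]
          refine (measure_mono ?_).trans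
            (aux_angle d hd p hp XY.1 XY.2 ε θ hε hθ hθε hsmall)
          rintro φ ⟨h, h'⟩
          exact ⟨h', h⟩
      _ = _ := by simp
  rw [← h1]
  exact h2

/-- A polynomial is rarely much smaller than its noisy increment:
`Pr(|p(X)| < (ε/θ)|p(X) - p(N_Y^θ(X))|) = O(d² ε)`. -/
theorem stmt7 :
    ∃ c₀ > (0:ℝ), ∃ C > (0:ℝ),
      ∀ (n d : ℕ) (p : MvPolynomial (Fin n) ℝ), p.totalDegree ≤ d →
        ∀ ε θ : ℝ, 0 < ε → 0 < θ → θ ≤ c₀ * ε →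
          (((stdGaussian n).prod (stdGaussian n))
            {XY | |MvPolynomial.eval XY.1 p| <
                  (ε / θ) * |MvPolynomial.eval XY.1 p -
                              MvPolynomial.eval (noisy θ XY.2 XY.1) p|}).toReal ≤
            C * (d : ℝ) ^ 2 * ε := by
  refine ⟨1, one_pos, 64, by norm_num, ?_⟩
  intro n d p hp ε θ hε hθ hθε
  rw [one_mul] at hθε
  apply ENNReal.toReal_le_of_le_ofReal (by positivity)
  rcases Nat.eq_zero_or_pos d with hd | hd
  · subst hd
    have hc := MvPolynomial.totalDegree_eq_zero_iff_eq_C.mp (Nat.le_zero.mp hp)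
    rw [hc]
    simp [not_lt.mpr (abs_nonneg (MvPolynomial.coeff 0 p))]
  · by_cases hsmall : 64 * (d : ℝ) ^ 2 * ε ≤ 1
    · exact aux_main d hd p hp ε θ hε hθ hθε hsmall
    · refine prob_le_one.trans ?_
      rw [← ENNReal.ofReal_one]
      exact ENNReal.ofReal_le_ofReal (not_le.mp hsmall).le
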